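/- For a > 1 and s, t > 0, f_a maps R_{st} = {x > 1+s, y > a+t} into R_{t+a-1, s} = {x > 1 + (t + a - 1), y > a + s}. Consequently f_a²(R_{ss}) ⊂ R_{s+a-1, s+a-1}. -/

import Mathlib

/-- The birational map `f_a(x,y) = (y(x+a)/(x-1), x+a-1)`. -/
noncomputable def fa (a : ℝ) (p : ℝ × ℝ) : ℝ × ℝ :=
  (p.2 * (p.1 + a) / (p.1 - 1), p.1 + a - 1)

/-- The region `R_{st} = {(x,y) : x > 1+s, y > a+t}`. -/
def Rst (a s t : ℝ) : Set (ℝ × ℝ) := {q : ℝ × ℝ | 1 + s < q.1 ∧ a + t < q.2}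

/-- The general step: since `a > -1`, the factor `(x + a) / (x - 1)` exceeds `1` for `x > 1`, so the
first coordinate of the image is larger than `y > 0`, while the second is a translate of `x`. -/
theorem fa_mem_Rst {a s t : ℝ} (ha : 1 < a) (hs : 0 < s) (ht : 0 < t) {p : ℝ × ℝ}
    (hp : p ∈ Rst a s t) : fa a p ∈ Rst a (t + a - 1) s := by
  obtain ⟨x, y⟩ := p
  obtain ⟨hx, hy⟩ : 1 + s < x ∧ a + t < y := hp
  change 1 + (t + a - 1) < y * (x + a) / (x - 1) ∧ a + s < x + a - 1
  refine ⟨?_, by linarith⟩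
  have hy0 : 0 < y := by linarith
  have hlt : y < y * (x + a) / (x - 1) := by
    rw [lt_div_iff₀ (by linarith)]
    exact mul_lt_mul_of_pos_left (by linarith) hy0
  linarith

/-- For `a > 1` and `s,t > 0`, `f_a` maps `R_{st}` into `R_{t+a-1, s}`; consequently
`f_a²` maps `R_{ss}` into `R_{s+a-1, s+a-1}`. -/
theorem fa_maps_Rst (a : ℝ) (ha : 1 < a) (s t : ℝ) (hs : 0 < s) (ht : 0 < t) :
    (∀ p ∈ Rst a s t, fa a p ∈ Rst a (t + a - 1) s) ∧
    (∀ p ∈ Rst a s s, fa a (fa a p) ∈ Rst a (s + a - 1) (s + a - 1)) := by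
  refine ⟨fun p hp => fa_mem_Rst ha hs ht hp, fun p hp => ?_⟩
  -- `R_{s,s}` goes to `R_{s+a-1,s}`, which goes to `R_{s+a-1,s+a-1}`.
  exact fa_mem_Rst ha (by linarith) hs (fa_mem_Rst ha hs hs hp)
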